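/- Let λ be a colored ℓ-multi-partition with coloring p : {1,…,ℓ} → ℤ/n, let ξ be a slope datum, let r = (k;i,j) be a removable ī-node of λ and a = (k′;i′,j′) an addable ī-node of λ with h^ξ(r) + ξ_Ω + ξ_Ω̄ > h^ξ(a) > h^ξ(r). If j < j′, then (i′,j) ∈ λ(k′) and the triple ((i′,j), k′, k) is ξ-illegal for λ. -/

import Mathlib

/-!
Column `j` of `lam k` ends at the removable node `r = (k;i,j)`, and row `i'` of `lam k'` ends one
box before the addable node `a = (k';i',j')`. Hence `leg (i',j) = i - i'` and
`arm (i',j) = j' - 1 - j`, so the residue in the definition of an illegal triple is the color of `a`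
minus that of `r`, and its slope is `h r - h a + ξ_Ω̄`. Thus `((i',j),k',k)` is illegal exactly when
`j < j'`, the colors agree and `h r < h a < h r + ξ_Ω + ξ_Ω̄`.
-/

open scoped Classical

/-- A partition: `part m` is the `(m+1)`-st part, i.e. `λ_{m+1}`. -/
structure Ptn where
  part : ℕ → ℕ
  antitone' : ∀ i j : ℕ, i ≤ j → part j ≤ part i
  finite' : ∃ N : ℕ, ∀ i ≥ N, part i = 0

namespace Ptn

/-- `λ_i`, for `i ≥ 1`. -/
def row (q : Ptn) (i : ℕ) : ℕ := q.part (i - 1)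

/-- Membership of the box `(i,j)` (boxes have `i, j ≥ 1`). -/
def mem (q : Ptn) (i j : ℕ) : Prop := 1 ≤ i ∧ 1 ≤ j ∧ j ≤ q.row i

/-- The dual partition `λ'_j = #{i ≥ 1 : λ_i ≥ j}`. -/
noncomputable def dual (q : Ptn) (j : ℕ) : ℕ := Nat.card {i : ℕ // 1 ≤ i ∧ j ≤ q.row i}

/-- `arm_λ(i,j) = λ_i - j`. -/
def arm (q : Ptn) (i j : ℕ) : ℤ := (q.row i : ℤ) - (j : ℤ)

/-- `leg_λ(i,j) = λ'_j - i`. -/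
noncomputable def leg (q : Ptn) (i j : ℕ) : ℤ := (q.dual j : ℤ) - (i : ℤ)

/-- `(i,j)` is an addable node of `q`. -/
def Addable (q : Ptn) (i j : ℕ) : Prop :=
  1 ≤ i ∧ 1 ≤ j ∧ q.row i = j - 1 ∧ (i = 1 ∨ j ≤ q.row (i - 1))

/-- `(i,j)` is a removable node of `q`. -/
def Removable (q : Ptn) (i j : ℕ) : Prop :=
  1 ≤ i ∧ 1 ≤ j ∧ q.row i = j ∧ q.row (i + 1) < j

/-- The partition obtained by adding the box `(i,j)` (when `(i,j)` is addable). -/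
noncomputable def addBox (q : Ptn) (i j : ℕ) : Ptn :=
  if h : ∃ q' : Ptn, ∀ m : ℕ, q'.part m = if m = i - 1 then j else q.part m then
    h.choose else q

/-- The partition obtained by removing the box `(i,j)` (when `(i,j)` is removable). -/
noncomputable def removeBox (q : Ptn) (i j : ℕ) : Ptn :=
  if h : ∃ q' : Ptn, ∀ m : ℕ, q'.part m = if m = i - 1 then j - 1 else q.part m then
    h.choose else q

/-- The empty partition. -/
def empty : Ptn := ⟨fun _ => 0, fun _ _ _ => le_rfl, ⟨0, fun _ _ => rfl⟩⟩

end Ptn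
/-- Nodes (triples) `(k; i, j)`. -/
abbrev Node (l : ℕ) := Fin l × ℕ × ℕ

/-- Multi-partitions with `l` components. -/
abbrev MP (l : ℕ) := Fin l → Ptn

/-- The color `p(k) - i + j` of the triple `(k;i,j)`. -/
def colorOf (n l : ℕ) (p : Fin l → ZMod n) (x : Node l) : ZMod n :=
  p x.1 - (x.2.1 : ZMod n) + (x.2.2 : ZMod n)

/-- `(k;i,j)` is a box of the multi-partition `lam`. -/
def IsBox (l : ℕ) (lam : MP l) (x : Node l) : Prop := (lam x.1).mem x.2.1 x.2.2

/-- `(k;i,j)` is an addable `ib`-node of `lam`. -/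
def IsAdd (n l : ℕ) (lam : MP l) (p : Fin l → ZMod n) (ib : ZMod n) (x : Node l) : Prop :=
  (lam x.1).Addable x.2.1 x.2.2 ∧ colorOf n l p x = ib

/-- `(k;i,j)` is a removable `ib`-node of `lam`. -/
def IsRem (n l : ℕ) (lam : MP l) (p : Fin l → ZMod n) (ib : ZMod n) (x : Node l) : Prop :=
  (lam x.1).Removable x.2.1 x.2.2 ∧ colorOf n l p x = ib

/-- Add the box `x` to the multi-partition `lam`. -/
noncomputable def MPadd {l : ℕ} (lam : MP l) (x : Node l) : MP l :=
  Function.update lam x.1 ((lam x.1).addBox x.2.1 x.2.2)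

/-- Remove the box `x` from the multi-partition `lam`. -/
noncomputable def MPremove {l : ℕ} (lam : MP l) (x : Node l) : MP l :=
  Function.update lam x.1 ((lam x.1).removeBox x.2.1 x.2.2)

/-- The empty multi-partition. -/
def MPempty (l : ℕ) : MP l := fun _ => Ptn.empty

/-- A slope datum `(ξ_Ω, ξ_Ω̄, ξ_1, …, ξ_l)` of positive reals. -/
structure Slope (l : ℕ) where
  xiO : ℝ
  xiObar : ℝ
  xi : Fin l → ℝ
  xiO_pos : 0 < xiO
  xiObar_pos : 0 < xiObar
  xi_pos : ∀ k, 0 < xi k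

namespace Slope

/-- The height `h^ξ(k;i,j) = ξ_k + ξ_Ω i + ξ_Ω̄ j`. -/
def h {l : ℕ} (ξ : Slope l) (x : Node l) : ℝ :=
  ξ.xi x.1 + ξ.xiO * (x.2.1 : ℝ) + ξ.xiObar * (x.2.2 : ℝ)

/-- `ξ` is general: distinct triples have distinct heights. -/
def General {l : ℕ} (ξ : Slope l) : Prop :=
  ∀ x y : Node l, 1 ≤ x.2.1 → 1 ≤ x.2.2 → 1 ≤ y.2.1 → 1 ≤ y.2.2 → ξ.h x = ξ.h y → x = y

/-- `ξ` is aligned: `|ξ_s - ξ_t| < ξ_Ω + ξ_Ω̄` for all `s, t`. -/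
def Aligned {l : ℕ} (ξ : Slope l) : Prop :=
  ∀ s t : Fin l, |ξ.xi s - ξ.xi t| < ξ.xiO + ξ.xiObar

/-- `ξ` is integral: all entries are (positive) integers. -/
def Integral {l : ℕ} (ξ : Slope l) : Prop :=
  (∃ m : ℤ, ξ.xiO = (m : ℝ)) ∧ (∃ m : ℤ, ξ.xiObar = (m : ℝ)) ∧ ∀ k, ∃ m : ℤ, ξ.xi k = (m : ℝ)

end Slope
/-- The triple `((i,j), s, t)` is `ξ`-illegal for `lam`. -/
def Illegal (n l : ℕ) (lam : MP l) (p : Fin l → ZMod n) (ξ : Slope l)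
    (i j : ℕ) (s t : Fin l) : Prop :=
  (lam s).mem i j ∧
  (p s - p t + (((lam s).arm i j + (lam t).leg i j + 1 : ℤ) : ZMod n) = 0) ∧
  (-ξ.xiO < ξ.xi t - ξ.xi s + ξ.xiO * (((lam t).leg i j : ℤ) : ℝ)
      - ξ.xiObar * (((lam s).arm i j : ℤ) : ℝ)) ∧
  (ξ.xi t - ξ.xi s + ξ.xiO * (((lam t).leg i j : ℤ) : ℝ)
      - ξ.xiObar * (((lam s).arm i j : ℤ) : ℝ) < ξ.xiObar)

/-- `lam` is `ξ`-regular: no triple is `ξ`-illegal for `lam`. -/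
def Regular (n l : ℕ) (lam : MP l) (p : Fin l → ZMod n) (ξ : Slope l) : Prop :=
  ∀ (i j : ℕ) (s t : Fin l), ¬ Illegal n l lam p ξ i j s t

namespace Ptn

variable {q : Ptn} {i j : ℕ}

theorem row_antitone (q : Ptn) : Antitone q.row := fun _ _ h =>
  q.antitone' _ _ (Nat.sub_le_sub_right h 1)

/-- At `m = 0` both sides hold: truncated subtraction makes `q.row 0 = q.row 1`. -/
theorem Removable.le_row_iff (h : q.Removable i j) (m : ℕ) : j ≤ q.row m ↔ m ≤ i := by
  obtain ⟨-, -, row_eq, row_succ_lt⟩ := h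
  constructor
  · intro hjm
    by_contra! hlt
    exact (hjm.trans (q.row_antitone hlt)).not_gt row_succ_lt
  · intro hmi
    exact row_eq.symm.trans_le (q.row_antitone hmi)

theorem Removable.dual_eq (h : q.Removable i j) : q.dual j = i := by
  have rows_eq (m : ℕ) : (1 ≤ m ∧ j ≤ q.row m) ↔ m ∈ Finset.Icc 1 i := by
    rw [h.le_row_iff, Finset.mem_Icc]
  rw [dual, Nat.subtype_card _ fun m => (rows_eq m).symm, Nat.card_Icc, Nat.add_sub_cancel]

theorem Removable.leg_eq (h : q.Removable i j) (i' : ℕ) : q.leg i' j = i - i' := by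
  rw [leg, h.dual_eq]

theorem Addable.row_add_one (h : q.Addable i j) : q.row i + 1 = j := by
  rw [h.2.2.1, Nat.sub_add_cancel h.2.1]

theorem Addable.arm_eq (h : q.Addable i j) (j' : ℕ) : q.arm i j' = j - 1 - j' := by
  rw [arm, ← h.row_add_one, Nat.cast_add_one, add_sub_cancel_right]

theorem Addable.mem_iff (h : q.Addable i j) (j' : ℕ) : q.mem i j' ↔ 1 ≤ j' ∧ j' < j := by
  rw [mem, ← h.row_add_one, Nat.lt_add_one_iff, and_iff_right h.1]

end Ptn

section RemovableAddable

variable {n l : ℕ} {lam : MP l} {k k' : Fin l} {i j i' j' : ℕ}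

theorem colorOf_sub_colorOf (p : Fin l → ZMod n)
    (hr : (lam k).Removable i j) (ha : (lam k').Addable i' j') :
    colorOf n l p (k', i', j') - colorOf n l p (k, i, j) =
      p k' - p k + (((lam k').arm i' j + (lam k).leg i' j + 1 : ℤ) : ZMod n) := by
  rw [ha.arm_eq, hr.leg_eq, colorOf, colorOf]
  push_cast
  ring

theorem Slope.h_sub_h_add_xiObar (ξ : Slope l)
    (hr : (lam k).Removable i j) (ha : (lam k').Addable i' j') :
    ξ.h (k, i, j) - ξ.h (k', i', j') + ξ.xiObar =
      ξ.xi k - ξ.xi k' + ξ.xiO * ((lam k).leg i' j : ℝ) - ξ.xiObar * ((lam k').arm i' j : ℝ) := by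
  rw [ha.arm_eq, hr.leg_eq, Slope.h, Slope.h]
  push_cast
  ring

theorem illegal_iff_of_removable_of_addable (p : Fin l → ZMod n) (ξ : Slope l)
    (hr : (lam k).Removable i j) (ha : (lam k').Addable i' j') :
    Illegal n l lam p ξ i' j k' k ↔
      j < j' ∧ colorOf n l p (k', i', j') = colorOf n l p (k, i, j) ∧
        ξ.h (k, i, j) < ξ.h (k', i', j') ∧
        ξ.h (k', i', j') < ξ.h (k, i, j) + ξ.xiO + ξ.xiObar := by
  rw [Illegal, ha.mem_iff, and_iff_right hr.2.1, ← colorOf_sub_colorOf p hr ha, sub_eq_zero,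
    ← ξ.h_sub_h_add_xiObar hr ha]
  have lower_iff : -ξ.xiO < ξ.h (k, i, j) - ξ.h (k', i', j') + ξ.xiObar ↔
      ξ.h (k', i', j') < ξ.h (k, i, j) + ξ.xiO + ξ.xiObar := by
    constructor <;> intro <;> linarith
  have upper_iff : ξ.h (k, i, j) - ξ.h (k', i', j') + ξ.xiObar < ξ.xiObar ↔
      ξ.h (k, i, j) < ξ.h (k', i', j') := by
    rw [add_lt_iff_neg_right, sub_neg]
  rw [lower_iff, upper_iff, and_comm (a := ξ.h (k', i', j') < _)]

end RemovableAddable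

/-- with `r = (k;i,j)` removable and `a = (k';i',j')` addable (both `ib`-nodes)
satisfying `h(r) + ξ_Ω + ξ_Ω̄ > h(a) > h(r)`, if `j < j'` then `(i',j) ∈ lam(k')` and the
triple `((i',j), k', k)` is `ξ`-illegal for `lam`. -/
theorem stmt1 (n l : ℕ) (hn : 1 ≤ n) (hl : 1 ≤ l) (lam : MP l) (p : Fin l → ZMod n)
    (ξ : Slope l) (ib : ZMod n) (k k' : Fin l) (i j i' j' : ℕ)
    (hr : IsRem n l lam p ib (k, i, j)) (ha : IsAdd n l lam p ib (k', i', j'))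
    (h1 : ξ.h (k, i, j) + ξ.xiO + ξ.xiObar > ξ.h (k', i', j'))
    (h2 : ξ.h (k', i', j') > ξ.h (k, i, j)) (hj : j < j') :
    (lam k').mem i' j ∧ Illegal n l lam p ξ i' j k' k := by
  obtain ⟨hrem, hrcol⟩ := hr
  obtain ⟨hadd, hacol⟩ := ha
  have hill : Illegal n l lam p ξ i' j k' k :=
    (illegal_iff_of_removable_of_addable p ξ hrem hadd).2 ⟨hj, hacol.trans hrcol.symm, h2, h1⟩
  exact ⟨hill.1, hill⟩
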